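/- Let Q be a symmetric positive definite k×k matrix partitioned into blocks Q₁₁, Q₁₂, Q₂₁, Q₂₂, let γ ∈ ℝ^{k₂}, and let Z₁ ~ N(0, σ²I_{k₁}) and Z₂ ~ N(0, σ²I_{k₂}) be independent. Then the distribution of B_∞γ + C_∞Z₁ + [1 + exp(2αk₂) exp(−α‖Z₂ + (Q₂₂ − Q₂₁Q₁₁⁻¹Q₁₂)^{1/2}γ‖²/σ²)]⁻¹ · (D_∞Z₂ − B_∞γ) is absolutely continuous with respect to Lebesgue measure on ℝ^k with density f_{∞,γ}(t) = (2πσ²)^{−k/2} det(Q)^{1/2} · exp(−(2σ²)⁻¹‖Q₁₁^{1/2}t₁ + Q₁₁^{−1/2}Q₁₂t₂‖²) · [1 + exp(−ασ⁻²g(‖w‖)² + 2αk₂)]^{k₂} · {1 + 2ασ⁻²g(‖w‖)²[1 + exp(ασ⁻²g(‖w‖)² − 2αk₂)]⁻¹}⁻¹ · exp(−(2σ²)⁻¹‖g(‖w‖)w/‖w‖ − (Q₂₂ − Q₂₁Q₁₁⁻¹Q₁₂)^{1/2}γ‖²), where t = (t₁', t₂')' with t₁ ∈ ℝ^{k₁}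 and w = (Q₂₂ − Q₂₁Q₁₁⁻¹Q₁₂)^{1/2}(t₂ + γ). -/

import Mathlib

open MeasureTheory Matrix Real Filter Topology ENNReal NNReal

noncomputable section

/-- Euclidean norm of a finite tuple. -/
def enorm2 {ι : Type*} [Fintype ι] (v : ι → ℝ) : ℝ := Real.sqrt (∑ i, v i ^ 2)

/-- The `N(0, σ² I)` distribution on `ι → ℝ`, given by its Lebesgue density. -/
def gaussPi (ι : Type*) [Fintype ι] (σ2 : ℝ) : Measure (ι → ℝ) :=
  volume.withDensity fun x => ENNReal.ofReal
    ((2 * π * σ2) ^ (-(Fintype.card ι : ℝ) / 2) * Real.exp (-(enorm2 x) ^ 2 / (2 * σ2)))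

/-- The Lebesgue density of the `N(0, σ² Q⁻¹)` distribution on `ι → ℝ`
(for `Q` symmetric positive definite). -/
def gaussCovDens {ι : Type*} [Fintype ι] [DecidableEq ι] (σ2 : ℝ) (Q : Matrix ι ι ℝ)
    (x : ι → ℝ) : ℝ :=
  (2 * π * σ2) ^ (-(Fintype.card ι : ℝ) / 2) * Real.sqrt Q.det *
    Real.exp (-(x ⬝ᵥ Q.mulVec x) / (2 * σ2))

/-- The `N(0, σ² Q⁻¹)` distribution on `ι → ℝ` (for `Q` symmetric positive definite),
given by its Lebesgue density. -/
def gaussCov {ι : Type*} [Fintype ι] [DecidableEq ι] (σ2 : ℝ) (Q : Matrix ι ι ℝ) :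
    Measure (ι → ℝ) :=
  volume.withDensity fun x => ENNReal.ofReal (gaussCovDens σ2 Q x)

open Classical in
/-- Symmetric positive semidefinite square root (junk value `0` off the psd cone). -/
def msqrt {ι : Type*} [Fintype ι] [DecidableEq ι] (A : Matrix ι ι ℝ) : Matrix ι ι ℝ :=
  if h : A.PosSemidef then
    (h.1.eigenvectorUnitary : Matrix ι ι ℝ) *
      diagonal ((RCLike.ofReal : ℝ → ℝ) ∘ Real.sqrt ∘ h.1.eigenvalues) *
      star (h.1.eigenvectorUnitary : Matrix ι ι ℝ)
  else 0

open Classical in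
/-- Smallest eigenvalue of a symmetric matrix (junk value `0` otherwise). -/
def lamMin {ι : Type*} [Fintype ι] [DecidableEq ι] (A : Matrix ι ι ℝ) : ℝ :=
  if h : A.IsHermitian then ⨅ i, h.eigenvalues i else 0

open Classical in
/-- Largest eigenvalue of a symmetric matrix (junk value `0` otherwise). -/
def lamMax {ι : Type*} [Fintype ι] [DecidableEq ι] (A : Matrix ι ι ℝ) : ℝ :=
  if h : A.IsHermitian then ⨆ i, h.eigenvalues i else 0

variable {n k₁ k₂ : ℕ}

/-- First block of columns of the design matrix. -/
def X1 (X : Matrix (Fin n) (Fin k₁ ⊕ Fin k₂) ℝ) : Matrix (Fin n) (Fin k₁) ℝ :=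
  X.submatrix id Sum.inl

/-- Second block of columns of the design matrix. -/
def X2 (X : Matrix (Fin n) (Fin k₁ ⊕ Fin k₂) ℝ) : Matrix (Fin n) (Fin k₂) ℝ :=
  X.submatrix id Sum.inr

/-- Unrestricted least squares estimator. -/
def betaU (X : Matrix (Fin n) (Fin k₁ ⊕ Fin k₂) ℝ) (Y : Fin n → ℝ) : (Fin k₁ ⊕ Fin k₂) → ℝ :=
  (Xᵀ * X)⁻¹.mulVec (Xᵀ.mulVec Y)

/-- Restricted least squares estimator. -/
def betaR (X : Matrix (Fin n) (Fin k₁ ⊕ Fin k₂) ℝ) (Y : Fin n → ℝ) : (Fin k₁ ⊕ Fin k₂) → ℝ :=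
  Sum.elim (((X1 X)ᵀ * X1 X)⁻¹.mulVec ((X1 X)ᵀ.mulVec Y)) (fun _ => 0)

/-- Risk estimate of the restricted model. -/
def rR (X : Matrix (Fin n) (Fin k₁ ⊕ Fin k₂) ℝ) (σ2 : ℝ) (Y : Fin n → ℝ) : ℝ :=
  Y ⬝ᵥ Y - betaR X Y ⬝ᵥ (Xᵀ * X).mulVec (betaR X Y) + σ2 * (2 * k₁ - n)

/-- Risk estimate of the unrestricted model. -/
def rU (X : Matrix (Fin n) (Fin k₁ ⊕ Fin k₂) ℝ) (σ2 : ℝ) (Y : Fin n → ℝ) : ℝ :=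
  Y ⬝ᵥ Y - betaU X Y ⬝ᵥ (Xᵀ * X).mulVec (betaU X Y) + σ2 * (2 * (k₁ + k₂) - n)

/-- The model averaging weight `λ̂`. -/
def lamHat (α σ2 : ℝ) (X : Matrix (Fin n) (Fin k₁ ⊕ Fin k₂) ℝ) (Y : Fin n → ℝ) : ℝ :=
  Real.exp (-(α * rR X σ2 Y) / σ2) /
    (Real.exp (-(α * rR X σ2 Y) / σ2) + Real.exp (-(α * rU X σ2 Y) / σ2))

/-- Leung and Barron's model averaging estimator `β̃`. -/
def mavg (α σ2 : ℝ) (X : Matrix (Fin n) (Fin k₁ ⊕ Fin k₂) ℝ) (Y : Fin n → ℝ) :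
    (Fin k₁ ⊕ Fin k₂) → ℝ :=
  lamHat α σ2 X Y • betaR X Y + (1 - lamHat α σ2 X Y) • betaU X Y

/-- Projection on the column space of `X₁`. -/
def projR (X : Matrix (Fin n) (Fin k₁ ⊕ Fin k₂) ℝ) : Matrix (Fin n) (Fin n) ℝ :=
  X1 X * ((X1 X)ᵀ * X1 X)⁻¹ * (X1 X)ᵀ

/-- Projection on the column space of `X`. -/
def projU (X : Matrix (Fin n) (Fin k₁ ⊕ Fin k₂) ℝ) : Matrix (Fin n) (Fin n) ℝ :=
  X * (Xᵀ * X)⁻¹ * Xᵀ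

/-- The distribution `P_{n,β,σ}` of `Y = Xβ + u`, `u ~ N(0, σ² Iₙ)`. -/
def Pmeas (X : Matrix (Fin n) (Fin k₁ ⊕ Fin k₂) ℝ) (β : (Fin k₁ ⊕ Fin k₂) → ℝ) (σ2 : ℝ) :
    Measure (Fin n → ℝ) :=
  (gaussPi (Fin n) σ2).map (fun u => X.mulVec β + u)

/-- The function `h_{a,b}(ξ) = ξ / (1 + a exp(−ξ²/b))`. -/
def hfun (a b ξ : ℝ) : ℝ := ξ / (1 + a * Real.exp (-ξ ^ 2 / b))

/-- The inverse `g_{a,b}` of `h_{a,b}`. -/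
def gfun (a b : ℝ) : ℝ → ℝ := Function.invFun (hfun a b)

open Classical in
/-- `g(‖w‖) w / ‖w‖`, with the convention that this is `0` for `w = 0`. -/
def gdir (a b : ℝ) {ι : Type*} [Fintype ι] (w : ι → ℝ) : ι → ℝ :=
  if w = 0 then 0 else (gfun a b (enorm2 w) / enorm2 w) • w


/-- The finite-sample density `f_{n,β,σ}` of `√n(β̃ − β)` (Theorem 3 of the paper). -/
def fdens {n k₁ k₂ : ℕ} (X : Matrix (Fin n) (Fin k₁ ⊕ Fin k₂) ℝ)
    (β : (Fin k₁ ⊕ Fin k₂) → ℝ) (σ2 α : ℝ) (t : (Fin k₁ ⊕ Fin k₂) → ℝ) : ℝ :=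
  let a := Real.exp (2 * α * k₂)
  let b := σ2 / α
  let S := (X2 X)ᵀ * (1 - projR X) * X2 X
  let w := (Real.sqrt n)⁻¹ • (msqrt S).mulVec ((t ∘ Sum.inr) + Real.sqrt n • (β ∘ Sum.inr))
  (2 * π * σ2) ^ (-((k₁ : ℝ) + k₂) / 2) * Real.sqrt (((n : ℝ)⁻¹ • (Xᵀ * X)).det) *
    Real.exp (-(enorm2 ((Real.sqrt n)⁻¹ •
        ((msqrt ((X1 X)ᵀ * X1 X)).mulVec (t ∘ Sum.inl) +
          ((msqrt ((X1 X)ᵀ * X1 X))⁻¹ * (X1 X)ᵀ * X2 X).mulVec (t ∘ Sum.inr)))) ^ 2 /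
      (2 * σ2)) *
    (1 + Real.exp (-(α / σ2) * gfun a b (enorm2 w) ^ 2 + 2 * α * k₂)) ^ (k₂ : ℕ) *
    (1 + (2 * α / σ2) * gfun a b (enorm2 w) ^ 2 *
        (1 + Real.exp ((α / σ2) * gfun a b (enorm2 w) ^ 2 - 2 * α * k₂))⁻¹)⁻¹ *
    Real.exp (-(enorm2 (gdir a b w - (msqrt S).mulVec (β ∘ Sum.inr))) ^ 2 / (2 * σ2))

/-- The density `f_{∞,γ}` of the limiting distribution (formula (13) of the paper),
stated for a general symmetric positive definite matrix in place of `Q`. -/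
def fInfty {k₁ k₂ : ℕ} (Q : Matrix (Fin k₁ ⊕ Fin k₂) (Fin k₁ ⊕ Fin k₂) ℝ) (σ2 α : ℝ)
    (γ : Fin k₂ → ℝ) (t : (Fin k₁ ⊕ Fin k₂) → ℝ) : ℝ :=
  let a := Real.exp (2 * α * k₂)
  let b := σ2 / α
  let S := Q.toBlocks₂₂ - Q.toBlocks₂₁ * Q.toBlocks₁₁⁻¹ * Q.toBlocks₁₂
  let w := (msqrt S).mulVec ((t ∘ Sum.inr) + γ)
  (2 * π * σ2) ^ (-((k₁ : ℝ) + k₂) / 2) * Real.sqrt Q.det *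
    Real.exp (-(enorm2 ((msqrt Q.toBlocks₁₁).mulVec (t ∘ Sum.inl) +
        ((msqrt Q.toBlocks₁₁)⁻¹ * Q.toBlocks₁₂).mulVec (t ∘ Sum.inr))) ^ 2 / (2 * σ2)) *
    (1 + Real.exp (-(α / σ2) * gfun a b (enorm2 w) ^ 2 + 2 * α * k₂)) ^ (k₂ : ℕ) *
    (1 + (2 * α / σ2) * gfun a b (enorm2 w) ^ 2 *
        (1 + Real.exp ((α / σ2) * gfun a b (enorm2 w) ^ 2 - 2 * α * k₂))⁻¹)⁻¹ *
    Real.exp (-(enorm2 (gdir a b w - (msqrt S).mulVec γ)) ^ 2 / (2 * σ2))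


/-- The limiting law (12): the distribution of
`B_∞γ + C_∞Z₁ + [1 + exp(2αk₂) exp(−α‖Z₂ + (Q₂₂ − Q₂₁Q₁₁⁻¹Q₁₂)^{1/2}γ‖²/σ²)]⁻¹
  · (D_∞Z₂ − B_∞γ)` with `Z₁ ~ N(0, σ²I_{k₁})`, `Z₂ ~ N(0, σ²I_{k₂})` independent. -/
def limitLaw {k₁ k₂ : ℕ} (Q : Matrix (Fin k₁ ⊕ Fin k₂) (Fin k₁ ⊕ Fin k₂) ℝ) (σ2 α : ℝ)
    (γ : Fin k₂ → ℝ) : Measure ((Fin k₁ ⊕ Fin k₂) → ℝ) :=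
  ((gaussPi (Fin k₁) σ2).prod (gaussPi (Fin k₂) σ2)).map
    (fun Z : (Fin k₁ → ℝ) × (Fin k₂ → ℝ) =>
      (fromRows (Q.toBlocks₁₁⁻¹ * Q.toBlocks₁₂) (-1)).mulVec γ +
      (fromRows (msqrt Q.toBlocks₁₁)⁻¹ 0).mulVec Z.1 +
      (1 + Real.exp (2 * α * k₂) *
          Real.exp (-α * (enorm2 (Z.2 +
            (msqrt (Q.toBlocks₂₂ - Q.toBlocks₂₁ * Q.toBlocks₁₁⁻¹ * Q.toBlocks₁₂)).mulVec
              γ)) ^ 2 / σ2))⁻¹ •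
        ((fromRows
            (-(Q.toBlocks₁₁⁻¹ * Q.toBlocks₁₂ *
              (msqrt (Q.toBlocks₂₂ - Q.toBlocks₂₁ * Q.toBlocks₁₁⁻¹ * Q.toBlocks₁₂))⁻¹))
            ((msqrt (Q.toBlocks₂₂ - Q.toBlocks₂₁ * Q.toBlocks₁₁⁻¹ * Q.toBlocks₁₂))⁻¹)).mulVec
            Z.2 -
          (fromRows (Q.toBlocks₁₁⁻¹ * Q.toBlocks₁₂) (-1)).mulVec γ))

/-!
Write `S` for the Schur complement of `Q₁₁` in `Q` and `c = S^{1/2}γ`. The block upper triangular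
matrix `N` with diagonal blocks `Q₁₁^{1/2}` and `S^{1/2}` and upper right block `Q₁₁^{-1/2}Q₁₂`
satisfies `NᵀN = Q`, so `|det N| = √(det Q)`. It decouples the two Gaussian vectors: applied to the
averaged estimator and shifted by `(0, c)`, it gives `(Z₁, H(Z₂ + c))`, where
`H(y) = y / (1 + a exp(−‖y‖²/b))`. Since `H` scales the length of a vector through the strictly
increasing `h_{a,b}`, it is a diffeomorphism with inverse `w ↦ g(‖w‖) w / ‖w‖`. Its derivative at
`y` is a scalar multiple of a rank-one perturbation `1 + k y yᵀ` of the identity, so its Jacobian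
determinant is explicit. The density follows by changing variables, first through `H` and then
through `N`.
-/

/-! ### Change of variables for densities -/

section ChangeOfVariables

theorem map_withDensity_ofReal_eq_of_hasFDerivAt {E : Type*} [NormedAddCommGroup E]
    [NormedSpace ℝ E] [FiniteDimensional ℝ E] [MeasurableSpace E] [BorelSpace E] (μ : Measure E)
    [μ.IsAddHaarMeasure] {F G : E → E} {F' : E → E →L[ℝ] E}
    (hF : ∀ x, HasFDerivAt F (F' x) x) (hGF : Function.LeftInverse G F)
    (hFG : Function.RightInverse G F) (hdet : ∀ x, (F' x).det ≠ 0) (p : E → ℝ) :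
    (μ.withDensity fun x => ENNReal.ofReal (p x)).map F =
      μ.withDensity fun y => ENNReal.ofReal (p (G y) / |(F' (G y)).det|) := by
  have hFm : Measurable F :=
    (continuous_iff_continuousAt.2 fun x => (hF x).continuousAt).measurable
  ext s hs
  rw [Measure.map_apply hFm hs, withDensity_apply _ (hFm hs), withDensity_apply _ hs,
    ← Set.image_preimage_eq s hFG.surjective,
    lintegral_image_eq_lintegral_abs_det_fderiv_mul μ (hFm hs)
      (fun x _ => (hF x).hasFDerivWithinAt) hGF.injective.injOn,
    Set.image_preimage_eq s hFG.surjective]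
  refine lintegral_congr fun x => ?_
  rw [hGF x, ← ENNReal.ofReal_mul (abs_nonneg _), mul_div_cancel₀ _ (abs_ne_zero.2 (hdet x))]

theorem map_withDensity_ofReal_mulVec_inv_sub {ι : Type*} [Fintype ι] [DecidableEq ι]
    {N : Matrix ι ι ℝ} (hN : N.det ≠ 0) (e : ι → ℝ) (p : (ι → ℝ) → ℝ) :
    (volume.withDensity fun x => ENNReal.ofReal (p x)).map (fun x => N⁻¹ *ᵥ (x - e)) =
      volume.withDensity fun t => ENNReal.ofReal (|N.det| * p (N *ᵥ t + e)) := by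
  have hderiv (x : ι → ℝ) : HasFDerivAt (fun x => N⁻¹ *ᵥ (x - e))
      (LinearMap.toContinuousLinearMap (toLin' N⁻¹)) x :=
    (LinearMap.toContinuousLinearMap (toLin' N⁻¹)).hasFDerivAt.comp x
      ((hasFDerivAt_id x).sub_const e)
  have hdet : (LinearMap.toContinuousLinearMap (toLin' N⁻¹)).det = N.det⁻¹ := by
    rw [LinearMap.det_toContinuousLinearMap, LinearMap.det_toLin', det_nonsing_inv,
      Ring.inverse_eq_inv']
  rw [map_withDensity_ofReal_eq_of_hasFDerivAt volume hderiv (G := fun t => N *ᵥ t + e)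
    (fun x => ?_) (fun t => ?_) (fun _ => hdet ▸ inv_ne_zero hN)]
  · simp only [hdet, abs_inv, div_inv_eq_mul, mul_comm |N.det|]
  · beta_reduce
    rw [mulVec_mulVec, mul_nonsing_inv _ hN.isUnit, one_mulVec, sub_add_cancel]
  · rw [add_sub_cancel_right, mulVec_mulVec, nonsing_inv_mul _ hN.isUnit, one_mulVec]

theorem map_sumElim_prod_withDensity {ι κ : Type*} [Fintype ι] [Fintype κ]
    {p : (ι → ℝ) → ℝ≥0∞} {q : (κ → ℝ) → ℝ≥0∞} (hp : Measurable p) (hq : Measurable q) :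
    ((volume.withDensity p).prod (volume.withDensity q)).map (fun z => Sum.elim z.1 z.2) =
      volume.withDensity fun x : ι ⊕ κ → ℝ => p (x ∘ Sum.inl) * q (x ∘ Sum.inr) := by
  let e := (MeasurableEquiv.sumPiEquivProdPi fun _ : ι ⊕ κ => ℝ).symm
  have he : MeasurePreserving e volume volume :=
    volume_measurePreserving_sumPiEquivProdPi_symm fun _ => ℝ
  have hcoe : (fun z : (ι → ℝ) × (κ → ℝ) => Sum.elim z.1 z.2) = e := by
    ext z (i | i) <;> rfl
  rw [prod_withDensity hp hq, hcoe]
  ext s hs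
  rw [e.map_apply, withDensity_apply _ (e.measurable hs), withDensity_apply _ hs,
    ← he.setLIntegral_comp_preimage_emb e.measurableEmbedding]
  rfl

end ChangeOfVariables

/-! ### Matrix square roots -/

section Msqrt

open scoped MatrixOrder

variable {ι : Type*} [Fintype ι] [DecidableEq ι] {A : Matrix ι ι ℝ}

theorem msqrt_eq_cfcSqrt (hA : A.PosSemidef) : msqrt A = CFC.sqrt A := by
  rw [CFC.sqrt_eq_real_sqrt A hA.nonneg, cfcₙ_eq_cfc, hA.1.cfc_eq, IsHermitian.cfc,
    Unitary.conjStarAlgAut_apply, msqrt, dif_pos hA]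

theorem msqrt_mul_self (hA : A.PosSemidef) : msqrt A * msqrt A = A := by
  rw [msqrt_eq_cfcSqrt hA, CFC.sqrt_mul_sqrt_self A hA.nonneg]

theorem transpose_msqrt (hA : A.PosSemidef) : (msqrt A)ᵀ = msqrt A := by
  rw [msqrt_eq_cfcSqrt hA]
  exact (CFC.sqrt_nonneg A).posSemidef.isHermitian

theorem isUnit_det_msqrt (hA : A.PosDef) : IsUnit (msqrt A).det := by
  have h : IsUnit (msqrt A * msqrt A).det := by
    rw [msqrt_mul_self hA.posSemidef]; exact hA.det_pos.ne'.isUnit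
  exact isUnit_of_mul_isUnit_left (det_mul (msqrt A) _ ▸ h)

theorem msqrt_mul_inv (hA : A.PosDef) : msqrt A * A⁻¹ = (msqrt A)⁻¹ := by
  nth_rw 2 [← msqrt_mul_self hA.posSemidef]
  rw [Matrix.mul_inv_rev, mul_nonsing_inv_cancel_left _ _ (isUnit_det_msqrt hA)]

end Msqrt

section BlockCholesky

variable {m n : Type*}

theorem posDef_toBlocks₁₁ {Q : Matrix (m ⊕ n) (m ⊕ n) ℝ} (hQ : Q.PosDef) : Q.toBlocks₁₁.PosDef :=
  hQ.submatrix Sum.inl_injective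

theorem transpose_toBlocks₁₂ {Q : Matrix (m ⊕ n) (m ⊕ n) ℝ} (hQ : Q.IsHermitian) :
    Q.toBlocks₁₂ᵀ = Q.toBlocks₂₁ := by
  ext i j
  exact hQ.apply (Sum.inr i) (Sum.inl j)

/-- The Schur complement `Q₂₂ − Q₂₁Q₁₁⁻¹Q₁₂` of the upper left block of `Q`. It is reducible, so
that it unifies with the expression occurring in the limiting law and its density. -/
abbrev schurCompl [Fintype m] [DecidableEq m] (Q : Matrix (m ⊕ n) (m ⊕ n) ℝ) : Matrix n n ℝ :=
  Q.toBlocks₂₂ - Q.toBlocks₂₁ * Q.toBlocks₁₁⁻¹ * Q.toBlocks₁₂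

theorem posDef_schurCompl [Fintype m] [DecidableEq m] [Finite n] {Q : Matrix (m ⊕ n) (m ⊕ n) ℝ}
    (hQ : Q.PosDef) : (schurCompl Q).PosDef := by
  classical
  cases nonempty_fintype n
  have h₁₁ := posDef_toBlocks₁₁ hQ
  let _ : Invertible Q.toBlocks₁₁ := invertibleOfIsUnitDet _ h₁₁.det_pos.ne'.isUnit
  have h₂₁ : Q.toBlocks₁₂ᴴ = Q.toBlocks₂₁ := transpose_toBlocks₁₂ hQ.isHermitian
  have hpsd : (schurCompl Q).PosSemidef := by
    rw [schurCompl, ← h₂₁, ← PosDef.fromBlocks₁₁ _ _ h₁₁, h₂₁, fromBlocks_toBlocks]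
    exact hQ.posSemidef
  have hdet : Q.det = Q.toBlocks₁₁.det * (schurCompl Q).det := by
    nth_rw 1 [← fromBlocks_toBlocks Q]
    rw [det_fromBlocks₁₁, invOf_eq_nonsing_inv]
  exact hpsd.posDef_iff_det_ne_zero.2 (right_ne_zero_of_mul (hdet ▸ hQ.det_pos.ne'))

variable [Fintype m] [Fintype n] [DecidableEq m] [DecidableEq n] {Q : Matrix (m ⊕ n) (m ⊕ n) ℝ}

/-- The block Cholesky factor of a symmetric positive definite `Q`: the block upper triangular
matrix `N` with symmetric positive definite diagonal blocks such that `NᵀN = Q`. -/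
def blockCholesky (Q : Matrix (m ⊕ n) (m ⊕ n) ℝ) : Matrix (m ⊕ n) (m ⊕ n) ℝ :=
  fromBlocks (msqrt Q.toBlocks₁₁) ((msqrt Q.toBlocks₁₁)⁻¹ * Q.toBlocks₁₂) 0 (msqrt (schurCompl Q))

theorem transpose_blockCholesky_mul_self (hQ : Q.PosDef) :
    (blockCholesky Q)ᵀ * blockCholesky Q = Q := by
  have h₁₁ := posDef_toBlocks₁₁ hQ
  have hS := (posDef_schurCompl hQ).posSemidef
  have hR := isUnit_det_msqrt h₁₁
  have hinv : (msqrt Q.toBlocks₁₁)⁻¹ * (msqrt Q.toBlocks₁₁)⁻¹ = Q.toBlocks₁₁⁻¹ := by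
    rw [← Matrix.mul_inv_rev, msqrt_mul_self h₁₁.posSemidef]
  have h₂₁ : Q.toBlocks₂₁ * (msqrt Q.toBlocks₁₁)⁻¹ * ((msqrt Q.toBlocks₁₁)⁻¹ * Q.toBlocks₁₂) =
      Q.toBlocks₂₁ * Q.toBlocks₁₁⁻¹ * Q.toBlocks₁₂ := by
    rw [← hinv]
    simp only [Matrix.mul_assoc]
  simp only [blockCholesky, fromBlocks_transpose, fromBlocks_multiply, transpose_mul,
    transpose_nonsing_inv, transpose_msqrt h₁₁.posSemidef, transpose_msqrt hS,
    transpose_toBlocks₁₂ hQ.isHermitian, transpose_zero, Matrix.zero_mul, Matrix.mul_zero,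
    add_zero, msqrt_mul_self h₁₁.posSemidef, msqrt_mul_self hS, mul_nonsing_inv_cancel_left _ _ hR,
    nonsing_inv_mul_cancel_right _ _ hR, h₂₁, add_sub_cancel, fromBlocks_toBlocks]

theorem abs_det_blockCholesky (hQ : Q.PosDef) : |(blockCholesky Q).det| = √Q.det := by
  nth_rw 2 [← transpose_blockCholesky_mul_self hQ]
  rw [det_mul, det_transpose, Real.sqrt_mul_self_eq_abs]

theorem det_blockCholesky_ne_zero (hQ : Q.PosDef) : (blockCholesky Q).det ≠ 0 := by
  rw [← abs_pos, abs_det_blockCholesky hQ]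
  exact Real.sqrt_pos.2 hQ.det_pos

theorem blockCholesky_mulVec_add_comp_inl (Q : Matrix (m ⊕ n) (m ⊕ n) ℝ) (t : m ⊕ n → ℝ)
    (c : n → ℝ) :
    (blockCholesky Q *ᵥ t + Sum.elim (0 : m → ℝ) c) ∘ Sum.inl =
      msqrt Q.toBlocks₁₁ *ᵥ (t ∘ Sum.inl) +
        ((msqrt Q.toBlocks₁₁)⁻¹ * Q.toBlocks₁₂) *ᵥ (t ∘ Sum.inr) := by
  rw [blockCholesky, fromBlocks_mulVec, ← Sum.elim_add_add, Sum.elim_comp_inl, add_zero]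

theorem blockCholesky_mulVec_add_comp_inr (Q : Matrix (m ⊕ n) (m ⊕ n) ℝ) (t : m ⊕ n → ℝ)
    (γ : n → ℝ) :
    (blockCholesky Q *ᵥ t + Sum.elim (0 : m → ℝ) (msqrt (schurCompl Q) *ᵥ γ)) ∘ Sum.inr =
      msqrt (schurCompl Q) *ᵥ (t ∘ Sum.inr + γ) := by
  rw [blockCholesky, fromBlocks_mulVec, ← Sum.elim_add_add, Sum.elim_comp_inr, zero_mulVec,
    zero_add, mulVec_add]

theorem blockCholesky_mulVec_average (hQ : Q.PosDef) (γ : n → ℝ) (z₁ : m → ℝ) (z₂ : n → ℝ)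
    (ρ : ℝ) :
    blockCholesky Q *ᵥ (fromRows (Q.toBlocks₁₁⁻¹ * Q.toBlocks₁₂) (-1) *ᵥ γ +
        fromRows (msqrt Q.toBlocks₁₁)⁻¹ 0 *ᵥ z₁ +
        ρ • (fromRows (-(Q.toBlocks₁₁⁻¹ * Q.toBlocks₁₂ * (msqrt (schurCompl Q))⁻¹))
            (msqrt (schurCompl Q))⁻¹ *ᵥ z₂ -
          fromRows (Q.toBlocks₁₁⁻¹ * Q.toBlocks₁₂) (-1) *ᵥ γ)) +
      Sum.elim (0 : m → ℝ) (msqrt (schurCompl Q) *ᵥ γ) =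
    Sum.elim z₁ (ρ • (z₂ + msqrt (schurCompl Q) *ᵥ γ)) := by
  have h₁₁ := posDef_toBlocks₁₁ hQ
  have hR := isUnit_det_msqrt h₁₁
  have hT := isUnit_det_msqrt (posDef_schurCompl hQ)
  have hB : blockCholesky Q * fromRows (Q.toBlocks₁₁⁻¹ * Q.toBlocks₁₂) (-1 : Matrix n n ℝ) =
      fromRows 0 (-msqrt (schurCompl Q)) := by
    rw [blockCholesky, fromBlocks_mul_fromRows]
    simp [← Matrix.mul_assoc, msqrt_mul_inv h₁₁]
  have hC : blockCholesky Q * fromRows (msqrt Q.toBlocks₁₁)⁻¹ (0 : Matrix n m ℝ) =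
      fromRows 1 0 := by
    rw [blockCholesky, fromBlocks_mul_fromRows]
    simp [mul_nonsing_inv _ hR]
  have hD : blockCholesky Q * fromRows (-(Q.toBlocks₁₁⁻¹ * Q.toBlocks₁₂ *
      (msqrt (schurCompl Q))⁻¹)) (msqrt (schurCompl Q))⁻¹ = fromRows 0 1 := by
    rw [blockCholesky, fromBlocks_mul_fromRows]
    simp [← Matrix.mul_assoc, msqrt_mul_inv h₁₁, mul_nonsing_inv _ hT]
  simp only [mulVec_add, mulVec_sub, mulVec_smul, mulVec_mulVec, hB, hC, hD]
  simp only [fromRows_mulVec]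
  ext (i | i)
  · simp
  · simp only [zero_mulVec, neg_mulVec, one_mulVec, Pi.add_apply, Sum.elim_inr, Pi.neg_apply,
      Pi.zero_apply, add_zero, Pi.smul_apply, Pi.sub_apply, sub_neg_eq_add, smul_eq_mul]
    ring

end BlockCholesky

/-! ### The scalar shrinkage function -/

section LogisticWeight

variable {a b : ℝ}

/-- The weight `1 / (1 + a exp(−s/b))` which the averaging puts on the unrestricted estimator,
as a function of the squared norm `s` of the vector to be shrunk. -/
def logisticWeight (a b s : ℝ) : ℝ := (1 + a * Real.exp (-s / b))⁻¹

theorem logisticWeight_pos (ha : 0 ≤ a) (b s : ℝ) : 0 < logisticWeight a b s := by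
  unfold logisticWeight; positivity

theorem logisticWeight_le_one (ha : 0 ≤ a) (b s : ℝ) : logisticWeight a b s ≤ 1 :=
  inv_le_one_of_one_le₀ (le_add_of_nonneg_right (by positivity))

theorem inv_one_add_le_logisticWeight (ha : 0 ≤ a) (hb : 0 ≤ b) {s : ℝ} (hs : 0 ≤ s) :
    (1 + a)⁻¹ ≤ logisticWeight a b s := by
  have hexp : Real.exp (-s / b) ≤ 1 :=
    Real.exp_le_one_iff.2 (div_nonpos_of_nonpos_of_nonneg (neg_nonpos.2 hs) hb)
  unfold logisticWeight
  gcongr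
  exact mul_le_of_le_one_right ha hexp

theorem hasDerivAt_logisticWeight (ha : 0 ≤ a) (b s : ℝ) :
    HasDerivAt (logisticWeight a b)
      (logisticWeight a b s * ((1 - logisticWeight a b s) / b)) s := by
  have hpos : 0 < 1 + a * Real.exp (-s / b) := by positivity
  have hden : HasDerivAt (fun s => 1 + a * Real.exp (-s / b))
      (a * (Real.exp (-s / b) * (-1 / b))) s :=
    ((((hasDerivAt_id' s).fun_neg.div_const b).exp).const_mul a).const_add 1
  refine (hden.fun_inv hpos.ne').congr_deriv ?_
  simp only [logisticWeight]
  field_simp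
  ring

theorem hfun_eq_logisticWeight_mul (a b ξ : ℝ) : hfun a b ξ = logisticWeight a b (ξ ^ 2) * ξ :=
  div_eq_inv_mul _ _

theorem hfun_zero (a b : ℝ) : hfun a b 0 = 0 := zero_div _

theorem hfun_neg (a b ξ : ℝ) : hfun a b (-ξ) = -hfun a b ξ := by
  simp only [hfun, neg_sq, neg_div]

theorem hasDerivAt_hfun (ha : 0 ≤ a) (b ξ : ℝ) :
    HasDerivAt (hfun a b) (logisticWeight a b (ξ ^ 2) *
      (1 + 2 * ((1 - logisticWeight a b (ξ ^ 2)) / b) * ξ ^ 2)) ξ := by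
  have hsq : HasDerivAt (fun ξ : ℝ => ξ ^ 2) (2 * ξ) ξ := by simpa using hasDerivAt_pow 2 ξ
  have h := ((hasDerivAt_logisticWeight ha b (ξ ^ 2)).comp ξ hsq).mul (hasDerivAt_id ξ)
  rw [show hfun a b = _ from funext (hfun_eq_logisticWeight_mul a b)]
  refine h.congr_deriv ?_
  simp only [Function.comp_apply, id]
  ring

theorem strictMono_hfun (ha : 0 ≤ a) (hb : 0 ≤ b) : StrictMono (hfun a b) := by
  refine strictMono_of_deriv_pos fun ξ => ?_
  have hpos := logisticWeight_pos ha b (ξ ^ 2)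
  have hle := sub_nonneg.2 (logisticWeight_le_one ha b (ξ ^ 2))
  rw [(hasDerivAt_hfun ha b ξ).deriv]
  positivity

theorem tendsto_hfun_atTop (ha : 0 ≤ a) (hb : 0 ≤ b) : Tendsto (hfun a b) atTop atTop := by
  refine tendsto_atTop_mono' atTop ?_
    (tendsto_id.const_mul_atTop (show 0 < (1 + a)⁻¹ by positivity))
  filter_upwards [eventually_ge_atTop 0] with ξ hξ
  rw [hfun_eq_logisticWeight_mul]
  exact mul_le_mul_of_nonneg_right (inv_one_add_le_logisticWeight ha hb (sq_nonneg ξ)) hξ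

theorem tendsto_hfun_atBot (ha : 0 ≤ a) (hb : 0 ≤ b) : Tendsto (hfun a b) atBot atBot := by
  refine (tendsto_neg_atTop_atBot.comp
    ((tendsto_hfun_atTop ha hb).comp tendsto_neg_atBot_atTop)).congr fun ξ => ?_
  simp only [Function.comp_apply, hfun_neg, neg_neg]

theorem surjective_hfun (ha : 0 ≤ a) (hb : 0 ≤ b) : Function.Surjective (hfun a b) :=
  (continuous_iff_continuousAt.2 fun ξ => (hasDerivAt_hfun ha b ξ).continuousAt).surjective
    (tendsto_hfun_atTop ha hb) (tendsto_hfun_atBot ha hb)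

theorem gfun_hfun (ha : 0 ≤ a) (hb : 0 ≤ b) (ξ : ℝ) : gfun a b (hfun a b ξ) = ξ :=
  Function.leftInverse_invFun (strictMono_hfun ha hb).injective ξ

theorem hfun_gfun (ha : 0 ≤ a) (hb : 0 ≤ b) (r : ℝ) : hfun a b (gfun a b r) = r :=
  Function.rightInverse_invFun (surjective_hfun ha hb) r

theorem gfun_nonneg (ha : 0 ≤ a) (hb : 0 ≤ b) {r : ℝ} (hr : 0 ≤ r) : 0 ≤ gfun a b r := by
  rwa [← (strictMono_hfun ha hb).le_iff_le, hfun_zero, hfun_gfun ha hb]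

theorem gfun_zero (ha : 0 ≤ a) (hb : 0 ≤ b) : gfun a b 0 = 0 := by
  simpa only [hfun_zero] using gfun_hfun ha hb 0

end LogisticWeight

/-! ### Radial maps -/

section Radial

variable {ι : Type*} [Fintype ι]

theorem enorm2_sq (v : ι → ℝ) : enorm2 v ^ 2 = v ⬝ᵥ v := by
  rw [enorm2, Real.sq_sqrt (Finset.sum_nonneg fun _ _ => sq_nonneg _)]
  simp only [dotProduct, sq]

theorem enorm2_eq_norm (v : ι → ℝ) : enorm2 v = ‖WithLp.toLp 2 v‖ := by
  simp [EuclideanSpace.norm_eq, enorm2]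

theorem enorm2_nonneg (v : ι → ℝ) : 0 ≤ enorm2 v := Real.sqrt_nonneg _

theorem enorm2_smul {c : ℝ} (hc : 0 ≤ c) (v : ι → ℝ) : enorm2 (c • v) = c * enorm2 v := by
  rw [enorm2_eq_norm, WithLp.toLp_smul, norm_smul_of_nonneg hc, ← enorm2_eq_norm]

theorem enorm2_eq_zero {v : ι → ℝ} : enorm2 v = 0 ↔ v = 0 := by
  rw [enorm2_eq_norm, norm_eq_zero, WithLp.toLp_eq_zero]

@[fun_prop]
theorem continuous_enorm2 : Continuous (enorm2 : (ι → ℝ) → ℝ) := by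
  unfold enorm2; fun_prop

/-- The operator `1 + k y yᵀ`, the shape of the derivative of a radial map at `y`. -/
def oneAddRankOne (k : ℝ) (y : ι → ℝ) : (ι → ℝ) →L[ℝ] (ι → ℝ) :=
  LinearMap.toContinuousLinearMap (LinearMap.transvection (dotProductBilin ℝ ℝ y) (k • y))

theorem oneAddRankOne_apply (k : ℝ) (y v : ι → ℝ) :
    oneAddRankOne k y v = v + (y ⬝ᵥ v) • k • y := rfl

theorem det_smul_oneAddRankOne (c k : ℝ) (y : ι → ℝ) :
    (c • oneAddRankOne k y).det = c ^ Fintype.card ι * (1 + k * enorm2 y ^ 2) := by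
  rw [oneAddRankOne, ContinuousLinearMap.det, ContinuousLinearMap.toLinearMap_smul,
    LinearMap.det_smul, LinearMap.coe_toContinuousLinearMap, LinearMap.transvection.det,
    Module.finrank_fintype_fun_eq_card, enorm2_sq]
  simp only [map_smul, dotProductBilin_apply_apply, smul_eq_mul]

theorem hasFDerivAt_enorm2_sq (y : ι → ℝ) :
    HasFDerivAt (fun v : ι → ℝ => enorm2 v ^ 2)
      ((2 : ℝ) • LinearMap.toContinuousLinearMap (dotProductBilin ℝ ℝ y)) y := by
  have h : HasFDerivAt (fun v : ι → ℝ => ∑ i, v i ^ 2)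
      (∑ i, (2 * y i) • (ContinuousLinearMap.proj i : (ι → ℝ) →L[ℝ] ℝ)) y :=
    HasFDerivAt.fun_sum fun i _ => by simpa using (hasFDerivAt_apply (𝕜 := ℝ) i y).pow 2
  simp only [enorm2_sq, dotProduct, ← sq]
  refine h.congr_fderiv ?_
  ext v
  simp [dotProduct, Finset.mul_sum, mul_assoc]

theorem hasFDerivAt_radial {φ : ℝ → ℝ} {k : ℝ} {y : ι → ℝ}
    (hφ : HasDerivAt φ (φ (enorm2 y ^ 2) * k) (enorm2 y ^ 2)) :
    HasFDerivAt (fun v : ι → ℝ => φ (enorm2 v ^ 2) • v)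
      (φ (enorm2 y ^ 2) • oneAddRankOne (2 * k) y) y := by
  refine ((hφ.comp_hasFDerivAt y (hasFDerivAt_enorm2_sq y)).smul (hasFDerivAt_id y)).congr_fderiv ?_
  ext v i
  simp only [Function.comp_apply, id_eq, _root_.add_apply, _root_.smul_apply,
    ContinuousLinearMap.id_apply, ContinuousLinearMap.smulRight_apply,
    LinearMap.coe_toContinuousLinearMap', dotProductBilin_apply_apply, smul_eq_mul, Pi.add_apply,
    Pi.smul_apply, oneAddRankOne_apply]
  ring

end Radial

/-! ### The vector shrinkage map -/

section Shrink

variable {ι : Type*} [Fintype ι] {a b : ℝ}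

/-- The radial extension `y ↦ h(‖y‖) y / ‖y‖` of `h = hfun a b`, whose inverse is `gdir a b`. -/
def shrink (a b : ℝ) (y : ι → ℝ) : ι → ℝ := logisticWeight a b (enorm2 y ^ 2) • y

/-- The Jacobian determinant of `shrink a b` at `y`. -/
def shrinkJacobian (a b : ℝ) (y : ι → ℝ) : ℝ :=
  logisticWeight a b (enorm2 y ^ 2) ^ Fintype.card ι *
    (1 + 2 * ((1 - logisticWeight a b (enorm2 y ^ 2)) / b) * enorm2 y ^ 2)

theorem enorm2_shrink (ha : 0 ≤ a) (b : ℝ) (y : ι → ℝ) :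
    enorm2 (shrink a b y) = hfun a b (enorm2 y) := by
  rw [shrink, enorm2_smul (logisticWeight_pos ha b _).le, hfun_eq_logisticWeight_mul]

theorem enorm2_gdir (ha : 0 ≤ a) (hb : 0 ≤ b) (w : ι → ℝ) :
    enorm2 (gdir a b w) = gfun a b (enorm2 w) := by
  by_cases hw : w = 0
  · have h₀ : enorm2 w = 0 := enorm2_eq_zero.2 hw
    rw [gdir, if_pos hw, h₀, gfun_zero ha hb, enorm2_eq_zero]
  · rw [gdir, if_neg hw, enorm2_smul (div_nonneg (gfun_nonneg ha hb (enorm2_nonneg w))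
      (enorm2_nonneg w)), div_mul_cancel₀ _ (mt enorm2_eq_zero.1 hw)]

theorem leftInverse_gdir_shrink (ha : 0 ≤ a) (hb : 0 ≤ b) :
    Function.LeftInverse (gdir a b) (shrink a b : (ι → ℝ) → ι → ℝ) := by
  intro y
  have hpos := logisticWeight_pos ha b (enorm2 y ^ 2)
  by_cases hy : y = 0
  · simp [shrink, gdir, hy]
  · have hy' : enorm2 y ≠ 0 := mt enorm2_eq_zero.1 hy
    have hne : shrink a b y ≠ 0 := smul_ne_zero hpos.ne' hy
    rw [gdir, if_neg hne, enorm2_shrink ha, gfun_hfun ha hb, hfun_eq_logisticWeight_mul, shrink,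
      smul_smul, div_mul_eq_mul_div, mul_comm (enorm2 y), div_self (mul_ne_zero hpos.ne' hy'),
      one_smul]

theorem rightInverse_gdir_shrink (ha : 0 ≤ a) (hb : 0 ≤ b) :
    Function.RightInverse (gdir a b) (shrink a b : (ι → ℝ) → ι → ℝ) := by
  intro w
  rw [shrink, enorm2_gdir ha hb]
  by_cases hw : w = 0
  · rw [gdir, if_pos hw, smul_zero, hw]
  · rw [gdir, if_neg hw, smul_smul, ← mul_div_assoc, ← hfun_eq_logisticWeight_mul,
      hfun_gfun ha hb, div_self (mt enorm2_eq_zero.1 hw), one_smul]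

theorem hasFDerivAt_shrink (ha : 0 ≤ a) (b : ℝ) (y : ι → ℝ) :
    HasFDerivAt (shrink a b) (logisticWeight a b (enorm2 y ^ 2) •
      oneAddRankOne (2 * ((1 - logisticWeight a b (enorm2 y ^ 2)) / b)) y) y :=
  hasFDerivAt_radial (hasDerivAt_logisticWeight ha b _)

theorem continuous_shrink (ha : 0 ≤ a) (b : ℝ) : Continuous (shrink a b : (ι → ℝ) → ι → ℝ) :=
  continuous_iff_continuousAt.2 fun y => (hasFDerivAt_shrink ha b y).continuousAt

theorem measurable_gdir (ha : 0 ≤ a) (hb : 0 ≤ b) :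
    Measurable (gdir a b : (ι → ℝ) → ι → ℝ) := by
  have hemb := (continuous_shrink (ι := ι) ha b).measurableEmbedding
    (leftInverse_gdir_shrink ha hb).injective
  rw [← hemb.measurable_comp_iff, (rightInverse_gdir_shrink ha hb).comp_eq_id]
  exact measurable_id

theorem shrinkJacobian_pos (ha : 0 ≤ a) (hb : 0 ≤ b) (y : ι → ℝ) : 0 < shrinkJacobian a b y := by
  have hpos := logisticWeight_pos ha b (enorm2 y ^ 2)
  have hle := sub_nonneg.2 (logisticWeight_le_one ha b (enorm2 y ^ 2))
  unfold shrinkJacobian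
  positivity

@[fun_prop]
theorem measurable_shrinkJacobian (a b : ℝ) :
    Measurable (shrinkJacobian a b : (ι → ℝ) → ℝ) := by
  unfold shrinkJacobian logisticWeight; fun_prop

theorem inv_shrinkJacobian (ha : 0 < a) (b : ℝ) (y : ι → ℝ) :
    (shrinkJacobian a b y)⁻¹ = (1 + a * Real.exp (-enorm2 y ^ 2 / b)) ^ Fintype.card ι *
      (1 + 2 / b * enorm2 y ^ 2 * (1 + (a * Real.exp (-enorm2 y ^ 2 / b))⁻¹)⁻¹)⁻¹ := by
  have hcompl : 1 - logisticWeight a b (enorm2 y ^ 2) =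
      (1 + (a * Real.exp (-enorm2 y ^ 2 / b))⁻¹)⁻¹ := by
    rw [logisticWeight]
    field_simp
    ring
  rw [shrinkJacobian, hcompl, logisticWeight, mul_inv, inv_pow, inv_inv]
  ring

theorem map_withDensity_shrink_add (ha : 0 ≤ a) (hb : 0 ≤ b) (c : ι → ℝ) (p : (ι → ℝ) → ℝ) :
    (volume.withDensity fun z => ENNReal.ofReal (p z)).map (fun z => shrink a b (z + c)) =
      volume.withDensity fun w =>
        ENNReal.ofReal (p (gdir a b w - c) * (shrinkJacobian a b (gdir a b w))⁻¹) := by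
  have hdet (y : ι → ℝ) : (logisticWeight a b (enorm2 y ^ 2) •
      oneAddRankOne (2 * ((1 - logisticWeight a b (enorm2 y ^ 2)) / b)) y).det =
      shrinkJacobian a b y := det_smul_oneAddRankOne _ _ y
  rw [map_withDensity_ofReal_eq_of_hasFDerivAt volume
    (fun z => (hasFDerivAt_comp_add_right c).2 (hasFDerivAt_shrink ha b (z + c)))
    (G := fun w => gdir a b w - c) (fun z => ?_) (fun w => ?_)
    (fun z => (hdet (z + c)).trans_ne (shrinkJacobian_pos ha hb _).ne')]
  · simp only [hdet, sub_add_cancel, abs_of_pos (shrinkJacobian_pos ha hb _)]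
    simp only [div_eq_mul_inv]
  · beta_reduce
    rw [leftInverse_gdir_shrink ha hb, add_sub_cancel_right]
  · beta_reduce
    rw [sub_add_cancel, rightInverse_gdir_shrink ha hb]

end Shrink

/-! ### The limiting law -/

section LimitLaw

/-- The Lebesgue density of `gaussPi ι σ2`. -/
def gaussPiDensity {ι : Type*} [Fintype ι] (σ2 : ℝ) (x : ι → ℝ) : ℝ :=
  (2 * π * σ2) ^ (-(Fintype.card ι : ℝ) / 2) * Real.exp (-(enorm2 x) ^ 2 / (2 * σ2))

theorem gaussPi_eq_withDensity (ι : Type*) [Fintype ι] (σ2 : ℝ) :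
    gaussPi ι σ2 = volume.withDensity fun x => ENNReal.ofReal (gaussPiDensity σ2 x) := rfl

theorem gaussPiDensity_nonneg {ι : Type*} [Fintype ι] {σ2 : ℝ} (hσ2 : 0 ≤ σ2) (x : ι → ℝ) :
    0 ≤ gaussPiDensity σ2 x := by
  unfold gaussPiDensity; positivity

@[fun_prop]
theorem measurable_gaussPiDensity {ι : Type*} [Fintype ι] (σ2 : ℝ) :
    Measurable (gaussPiDensity σ2 : (ι → ℝ) → ℝ) := by
  unfold gaussPiDensity; fun_prop

theorem gaussPiDensity_mul {ι κ : Type*} [Fintype ι] [Fintype κ] {σ2 : ℝ} (hσ2 : 0 < σ2)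
    (x : ι → ℝ) (y : κ → ℝ) :
    gaussPiDensity σ2 x * gaussPiDensity σ2 y =
      (2 * π * σ2) ^ (-((Fintype.card ι : ℝ) + Fintype.card κ) / 2) *
        Real.exp (-(enorm2 x) ^ 2 / (2 * σ2)) * Real.exp (-(enorm2 y) ^ 2 / (2 * σ2)) := by
  rw [neg_add, add_div, Real.rpow_add (by positivity)]
  simp only [gaussPiDensity]
  ring

instance {ι : Type*} [Fintype ι] (σ2 : ℝ) : SFinite (gaussPi ι σ2) := by
  rw [gaussPi_eq_withDensity]; infer_instance

variable {k₁ k₂ : ℕ} {Q : Matrix (Fin k₁ ⊕ Fin k₂) (Fin k₁ ⊕ Fin k₂) ℝ}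

theorem limitLaw_eq_map_blockCholesky (hQ : Q.PosDef) (σ2 α : ℝ) (γ : Fin k₂ → ℝ) :
    limitLaw Q σ2 α γ =
      (((gaussPi (Fin k₁) σ2).prod ((gaussPi (Fin k₂) σ2).map fun z =>
            shrink (Real.exp (2 * α * k₂)) (σ2 / α) (z + msqrt (schurCompl Q) *ᵥ γ))).map
          fun z => Sum.elim z.1 z.2).map
        fun x => (blockCholesky Q)⁻¹ *ᵥ
          (x - Sum.elim (0 : Fin k₁ → ℝ) (msqrt (schurCompl Q) *ᵥ γ)) := by
  set c := msqrt (schurCompl Q) *ᵥ γ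
  have hshrink : Measurable fun z : Fin k₂ → ℝ =>
      shrink (Real.exp (2 * α * k₂)) (σ2 / α) (z + c) :=
    ((continuous_shrink (Real.exp_pos _).le _).comp (continuous_id.add_const c)).measurable
  have hsumElim : Measurable fun z : (Fin k₁ → ℝ) × (Fin k₂ → ℝ) => Sum.elim z.1 z.2 :=
    measurable_pi_iff.2 (by
      rintro (i | i) <;> simp only [Sum.elim_inl, Sum.elim_inr] <;> fun_prop)
  have haffine : Measurable fun x =>
      (blockCholesky Q)⁻¹ *ᵥ (x - Sum.elim (0 : Fin k₁ → ℝ) c) := by fun_prop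
  rw [← Measure.map_id (μ := gaussPi (Fin k₁) σ2),
    Measure.map_prod_map _ _ measurable_id hshrink,
    Measure.map_map hsumElim (measurable_id.prodMap hshrink),
    Measure.map_map haffine (hsumElim.comp (measurable_id.prodMap hshrink)), limitLaw]
  congr 1 with Z : 1
  have hweight : (1 + Real.exp (2 * α * k₂) * Real.exp (-α * enorm2 (Z.2 + c) ^ 2 / σ2))⁻¹ =
      logisticWeight (Real.exp (2 * α * k₂)) (σ2 / α) (enorm2 (Z.2 + c) ^ 2) := by
    rw [logisticWeight, div_div_eq_mul_div, neg_mul, neg_mul, mul_comm α]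
  simp only [Function.comp_apply, Prod.map, id, shrink, hweight, c]
  rw [← blockCholesky_mulVec_average hQ, add_sub_cancel_right, mulVec_mulVec,
    nonsing_inv_mul _ (det_blockCholesky_ne_zero hQ).isUnit, one_mulVec]

theorem fInfty_eq_gaussPiDensity (hQ : Q.PosDef) {σ2 α : ℝ} (hσ2 : 0 < σ2) (hα : 0 ≤ α)
    (γ : Fin k₂ → ℝ) (t : Fin k₁ ⊕ Fin k₂ → ℝ) :
    let x := blockCholesky Q *ᵥ t + Sum.elim (0 : Fin k₁ → ℝ) (msqrt (schurCompl Q) *ᵥ γ)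
    let y := gdir (Real.exp (2 * α * k₂)) (σ2 / α) (x ∘ Sum.inr)
    fInfty Q σ2 α γ t =
      |(blockCholesky Q).det| * (gaussPiDensity σ2 (x ∘ Sum.inl) *
        (gaussPiDensity σ2 (y - msqrt (schurCompl Q) *ᵥ γ) *
          (shrinkJacobian (Real.exp (2 * α * k₂)) (σ2 / α) y)⁻¹)) := by
  intro x y
  have hb : 0 ≤ σ2 / α := div_nonneg hσ2.le hα
  have hexp : Real.exp (2 * α * k₂) * Real.exp (-enorm2 y ^ 2 / (σ2 / α)) =
      Real.exp (-(α / σ2) * enorm2 y ^ 2 + 2 * α * k₂) := by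
    rw [← Real.exp_add]
    congr 1
    rw [div_div_eq_mul_div]
    ring
  have hexp_inv : (Real.exp (-(α / σ2) * enorm2 y ^ 2 + 2 * α * k₂))⁻¹ =
      Real.exp (α / σ2 * enorm2 y ^ 2 - 2 * α * k₂) := by
    rw [← Real.exp_neg]
    ring_nf
  have hx₁ : x ∘ Sum.inl = _ := blockCholesky_mulVec_add_comp_inl Q t _
  have hx₂ : x ∘ Sum.inr = _ := blockCholesky_mulVec_add_comp_inr Q t γ
  have hy : enorm2 y = gfun (Real.exp (2 * α * k₂)) (σ2 / α) (enorm2 (x ∘ Sum.inr)) :=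
    enorm2_gdir (Real.exp_pos _).le hb _
  rw [← mul_assoc (gaussPiDensity σ2 (x ∘ Sum.inl)), gaussPiDensity_mul hσ2,
    inv_shrinkJacobian (Real.exp_pos _), hexp, hexp_inv, abs_det_blockCholesky hQ,
    div_div_eq_mul_div]
  simp only [fInfty, ← hx₁, ← hx₂, ← hy, Fintype.card_fin]
  ring

end LimitLaw

/-- the limiting law (12) is absolutely continuous with respect to Lebesgue
measure on `ℝ^k` with density `f_{∞,γ}` given by formula (13). -/
theorem statement8 {k₁ k₂ : ℕ} (hk₁ : 0 < k₁) (hk₂ : 0 < k₂)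
    (Q : Matrix (Fin k₁ ⊕ Fin k₂) (Fin k₁ ⊕ Fin k₂) ℝ) (hQ : Q.PosDef)
    (σ α : ℝ) (hσ : 0 < σ) (hα : 0 < α) (γ : Fin k₂ → ℝ) :
    limitLaw Q (σ ^ 2) α γ =
      volume.withDensity (fun t => ENNReal.ofReal (fInfty Q (σ ^ 2) α γ t)) := by
  have ha := (Real.exp_pos (2 * α * k₂)).le
  have hb : 0 ≤ σ ^ 2 / α := by positivity
  have hgauss (x : Fin k₁ → ℝ) : 0 ≤ gaussPiDensity (σ ^ 2) x :=
    gaussPiDensity_nonneg (sq_nonneg σ) x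
  have hgdir : Measurable (gdir (Real.exp (2 * α * k₂)) (σ ^ 2 / α) : (Fin k₂ → ℝ) → _) :=
    measurable_gdir ha hb
  rw [limitLaw_eq_map_blockCholesky hQ, gaussPi_eq_withDensity, gaussPi_eq_withDensity,
    map_withDensity_shrink_add ha hb, map_sumElim_prod_withDensity (by fun_prop) (by fun_prop)]
  simp only [← ENNReal.ofReal_mul (hgauss _)]
  rw [map_withDensity_ofReal_mulVec_inv_sub (det_blockCholesky_ne_zero hQ)]
  simp only [fInfty_eq_gaussPiDensity hQ (pow_pos hσ 2) hα.le]

end
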